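/- Let n be a positive integer, let 𝒜 be a finite family of subsets of {1,…,n} such that every S ∈ 𝒜 is an interval (a set of consecutive integers), and fix f > 0. Define v^agg(x) = max{ f·y : y ∈ [0,1], ∑_{j∈S} x_j ≥ y for every S ∈ 𝒜 } for x ∈ [0,1]^n. Then the hypograph of v^agg over the unit cube satisfies {(x,θ) ∈ [0,1]^n × ℝ : θ ≤ f and θ ≤ f·∑_{j∈S} x_j for every S ∈ 𝒜} = conv{ (β, v^agg(β)) : β ∈ {0,1}^n } + { (0, r) : r ≤ 0 }, where the sum is a Minkowski sum. -/

import Mathlib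

open scoped Pointwise

/-- The real vector in `{0,1}^n` associated with a Boolean vector `β`. -/
def toVec {n : ℕ} (β : Fin n → Bool) : Fin n → ℝ := fun i => if β i then 1 else 0

/-- `v^agg(x) = max{ f·y : y ∈ [0,1], ∑_{j∈S} x_j ≥ y for every S ∈ 𝒜 }`. -/
noncomputable def vagg {N : Type*} (A : Finset (Finset N)) (f : ℝ) (x : N → ℝ) : ℝ :=
  sSup {t | ∃ y : ℝ, y ∈ Set.Icc (0 : ℝ) 1 ∧
    (∀ S ∈ A, y ≤ ∑ j ∈ S, x j) ∧ t = f * y}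

open MeasureTheory

/-- Telescoping over an interval of `Fin n`. -/
lemma Fin.sum_Icc_sub_succ {n : ℕ} (G : ℕ → ℝ) {a b : Fin n} (hab : a ≤ b) :
    ∑ j ∈ Finset.Icc a b, (G (j + 1) - G j) = G (b + 1) - G a := by
  have h := Finset.sum_map (Finset.Icc a b) Fin.valEmbedding (fun k => G (k + 1) - G k)
  rw [Fin.map_valEmbedding_Icc] at h
  simp only [Fin.valEmbedding_apply] at h
  rw [← h, ← Finset.Ico_add_one_right_eq_Icc, Finset.sum_Ico_sub]
  exact Nat.le_succ_of_le hab

lemma Finset.eq_Icc_min'_max' {α : Type*} [LinearOrder α] [LocallyFiniteOrder α] {S : Finset α}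
    (hS : ∀ a ∈ S, ∀ b ∈ S, ∀ c, a ≤ c → c ≤ b → c ∈ S) (hne : S.Nonempty) :
    S = Finset.Icc (S.min' hne) (S.max' hne) := by
  ext c
  rw [Finset.mem_Icc]
  exact ⟨fun hc => ⟨S.min'_le c hc, S.le_max' c hc⟩,
    fun hc => hS _ (S.min'_mem hne) _ (S.max'_mem hne) c hc.1 hc.2⟩

lemma Int.intervalIntegrable_fract_sub (p : ℝ) :
    IntervalIntegrable (fun u : ℝ => Int.fract (p - u)) volume 0 1 := by
  rw [intervalIntegrable_iff]
  refine Measure.integrableOn_of_bounded (M := 1) (by simp) ?_ ?_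
  · exact (measurable_fract.comp (measurable_const.sub measurable_id)).aestronglyMeasurable
  · refine Filter.Eventually.of_forall fun u => ?_
    rw [Real.norm_of_nonneg (Int.fract_nonneg _)]
    exact (Int.fract_lt_one _).le

lemma Int.integral_fract_sub (p : ℝ) :
    ∫ u in (0 : ℝ)..1, Int.fract (p - u) = ∫ u in (0 : ℝ)..1, Int.fract u := by
  rw [intervalIntegral.integral_comp_sub_left (fun u => Int.fract u) p]
  have h := (Int.fract_periodic ℝ).intervalIntegral_add_eq (p - 1) 0
  simpa using h

lemma Int.floor_sub_eq (p q u : ℝ) :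
    ((⌊p - u⌋ : ℝ) - ⌊q - u⌋) = (p - q) - (Int.fract (p - u) - Int.fract (q - u)) := by
  simp only [Int.fract]
  ring

lemma Int.intervalIntegrable_floor_sub (p q : ℝ) :
    IntervalIntegrable (fun u : ℝ => (⌊p - u⌋ : ℝ) - ⌊q - u⌋) volume 0 1 := by
  simp only [Int.floor_sub_eq]
  exact intervalIntegrable_const.sub
    ((Int.intervalIntegrable_fract_sub p).sub (Int.intervalIntegrable_fract_sub q))

lemma Int.integral_floor_sub (p q : ℝ) :
    ∫ u in (0 : ℝ)..1, ((⌊p - u⌋ : ℝ) - ⌊q - u⌋) = p - q := by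
  simp only [Int.floor_sub_eq]
  rw [intervalIntegral.integral_sub intervalIntegrable_const
      ((Int.intervalIntegrable_fract_sub p).sub (Int.intervalIntegrable_fract_sub q)),
    intervalIntegral.integral_sub (Int.intervalIntegrable_fract_sub p)
      (Int.intervalIntegrable_fract_sub q),
    Int.integral_fract_sub, Int.integral_fract_sub]
  simp

/-- A point of the cube is a convex combination of binary points, each of which hits every
interval on which the original point has mass at least one (systematic sampling). -/
lemma mem_convexHull_toVec {n : ℕ} {x : Fin n → ℝ} (hx : ∀ i, x i ∈ Set.Icc (0 : ℝ) 1) :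
    x ∈ convexHull ℝ (toVec '' {β : Fin n → Bool | ∀ S : Finset (Fin n),
      (∀ a ∈ S, ∀ b ∈ S, ∀ c : Fin n, a ≤ c → c ≤ b → c ∈ S) →
        1 ≤ ∑ j ∈ S, x j → 1 ≤ ∑ j ∈ S, toVec β j}) := by
  set T := toVec '' {β : Fin n → Bool | ∀ S : Finset (Fin n),
      (∀ a ∈ S, ∀ b ∈ S, ∀ c : Fin n, a ≤ c → c ≤ b → c ∈ S) →
        1 ≤ ∑ j ∈ S, x j → 1 ≤ ∑ j ∈ S, toVec β j}
  let P : ℕ → ℝ := fun k => ∑ j ∈ Finset.range k, if h : j < n then x ⟨j, h⟩ else 0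
  have hP : ∀ j : Fin n, x j = P (j + 1) - P j := fun j => by
    simp [P, Finset.sum_range_succ]
  let g : ℝ → Fin n → ℝ := fun u j => (⌊P (j + 1) - u⌋ : ℝ) - ⌊P j - u⌋
  have hg : ∀ u, g u ∈ T := fun u => by
    have hbin : toVec (fun j => decide (g u j = 1)) = g u := by
      funext j
      have hlo : ⌊P j - u⌋ ≤ ⌊P (j + 1) - u⌋ :=
        Int.floor_le_floor (by linarith [hP j, (hx j).1])
      have hhi : ⌊P (j + 1) - u⌋ ≤ ⌊P j - u⌋ + 1 := by
        rw [← Int.floor_add_one]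
        exact Int.floor_le_floor (by linarith [hP j, (hx j).2])
      rcases (by lia : ⌊P (j + 1) - u⌋ = ⌊P j - u⌋ ∨ ⌊P (j + 1) - u⌋ = ⌊P j - u⌋ + 1) with h | h
      · simp [toVec, g, h]
      · simp [toVec, g, h]
    refine ⟨_, fun S hS h1 => ?_, hbin⟩
    rw [hbin]
    have hne : S.Nonempty := by
      rw [Finset.nonempty_iff_ne_empty]
      rintro rfl
      norm_num at h1
    have hle : S.min' hne ≤ S.max' hne := S.min'_le_max' hne
    rw [Finset.eq_Icc_min'_max' hS hne] at h1 ⊢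
    generalize S.min' hne = a at *
    generalize S.max' hne = b at *
    simp only [hP] at h1
    rw [Fin.sum_Icc_sub_succ P hle] at h1
    rw [Fin.sum_Icc_sub_succ (fun k => (⌊P k - u⌋ : ℝ)) hle]
    have h2 : ⌊P a - u⌋ + 1 ≤ ⌊P (b + 1) - u⌋ := by
      rw [← Int.floor_add_one]
      exact Int.floor_le_floor (by linarith)
    have h3 : (⌊P a - u⌋ : ℝ) + 1 ≤ ⌊P (b + 1) - u⌋ := by exact_mod_cast h2
    linarith
  have hTfin : T.Finite := (Set.toFinite _).image _
  let μ : Measure ℝ := volume.restrict (Set.Ioc 0 1)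
  have : IsProbabilityMeasure μ := ⟨by simp [μ]⟩
  have hint : ∀ i, Integrable (fun u => g u i) μ := fun i =>
    (intervalIntegrable_iff_integrableOn_Ioc_of_le zero_le_one).1
      (Int.intervalIntegrable_floor_sub (P (i + 1)) (P i))
  have hmem : ∫ u, g u ∂μ ∈ convexHull ℝ T :=
    (convex_convexHull ℝ T).integral_mem (hTfin.isClosed_convexHull ℝ)
      (Filter.Eventually.of_forall fun u => subset_convexHull ℝ T (hg u)) (Integrable.of_eval hint)
  convert hmem using 1
  funext i
  rw [eval_integral hint, hP i, ← Int.integral_floor_sub (P (i + 1)) (P i),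
    intervalIntegral.integral_of_le zero_le_one]

lemma toVec_mem_Icc {n : ℕ} (β : Fin n → Bool) (i : Fin n) : toVec β i ∈ Set.Icc (0 : ℝ) 1 := by
  unfold toVec
  split_ifs <;> simp

section vagg

variable {N : Type*} {A : Finset (Finset N)} {f : ℝ} {x : N → ℝ}

lemma mul_le_vagg (hf : 0 < f) {y : ℝ} (hy : y ∈ Set.Icc (0 : ℝ) 1)
    (h : ∀ S ∈ A, y ≤ ∑ j ∈ S, x j) : f * y ≤ vagg A f x := by
  refine le_csSup ⟨f, ?_⟩ ⟨y, hy, h, rfl⟩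
  rintro _ ⟨z, hz, -, rfl⟩
  exact mul_le_of_le_one_right hf.le hz.2

lemma vagg_le (hx : ∀ i, 0 ≤ x i) {c : ℝ}
    (h : ∀ y ∈ Set.Icc (0 : ℝ) 1, (∀ S ∈ A, y ≤ ∑ j ∈ S, x j) → f * y ≤ c) :
    vagg A f x ≤ c := by
  refine csSup_le ⟨f * 0, 0, by simp, fun S _ => Finset.sum_nonneg fun i _ => hx i, rfl⟩ ?_
  rintro _ ⟨y, hy, hS, rfl⟩
  exact h y hy hS

end vagg

/-- Splitting `x` as `y • w + (1 - y) • z` inside the cube, where `w` has mass at least one on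
every set on which `x` has mass at least `y`. -/
lemma exists_cube_split {N : Type*} {x : N → ℝ} (hx : ∀ i, x i ∈ Set.Icc (0 : ℝ) 1) {y : ℝ}
    (hy₀ : 0 < y) (hy₁ : y < 1) :
    ∃ w z : N → ℝ, (∀ i, w i ∈ Set.Icc (0 : ℝ) 1) ∧ (∀ i, z i ∈ Set.Icc (0 : ℝ) 1) ∧
      x = y • w + (1 - y) • z ∧
      ∀ S : Finset N, y ≤ ∑ j ∈ S, x j → 1 ≤ ∑ j ∈ S, w j := by
  have hy₂ : 0 < 1 - y := sub_pos.2 hy₁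
  have hnn : ∀ i, 0 ≤ min 1 (x i / y) := fun i => le_min zero_le_one (div_nonneg (hx i).1 hy₀.le)
  refine ⟨fun i => min 1 (x i / y), fun i => max 0 (x i - y) / (1 - y),
    fun i => ⟨hnn i, min_le_left _ _⟩, fun i => ⟨by positivity, ?_⟩, ?_, fun S hS => ?_⟩
  · rw [div_le_one hy₂]
    exact max_le hy₂.le (by linarith [(hx i).2])
  · funext i
    simp only [Pi.add_apply, Pi.smul_apply, smul_eq_mul]
    rw [mul_div_cancel₀ _ hy₂.ne', mul_min_of_nonneg _ _ hy₀.le, mul_div_cancel₀ _ hy₀.ne', mul_one]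
    rcases le_total y (x i) with h | h
    · rw [min_eq_left h, max_eq_right (by linarith)]; ring
    · rw [min_eq_right h, max_eq_left (by linarith)]; ring
  · by_cases h : ∃ j ∈ S, y ≤ x j
    · obtain ⟨j, hj, hyj⟩ := h
      calc (1 : ℝ) = min 1 (x j / y) := (min_eq_left ((one_le_div hy₀).2 hyj)).symm
        _ ≤ _ := Finset.single_le_sum (f := fun i => min 1 (x i / y)) (fun i _ => hnn i) hj
    · push Not at h
      rw [Finset.sum_congr rfl fun j hj => min_eq_right ((div_le_one hy₀).2 (h j hj).le),
        ← Finset.sum_div, one_le_div hy₀]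
      exact hS

/-- step in the proof of Proposition 3(iii) of the paper.
If every set of the family `𝒜` of subsets of `{1,…,n}` (modelled as `Fin n`) is an
interval, then the hypograph of `v^agg` over the unit cube,
`{(x,θ) ∈ [0,1]^n × ℝ : θ ≤ f and θ ≤ f·∑_{j∈S} x_j for every S ∈ 𝒜}`, equals the
Minkowski sum of the convex hull of `{(β, v^agg(β)) : β ∈ {0,1}^n}` and the downward
ray `{(0, r) : r ≤ 0}`. -/
theorem stmt_12 (n : ℕ) (hn : 0 < n) (A : Finset (Finset (Fin n)))
    (hA : ∀ S ∈ A, ∀ a ∈ S, ∀ b ∈ S, ∀ c : Fin n, a ≤ c → c ≤ b → c ∈ S)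
    (f : ℝ) (hf : 0 < f) :
    {p : (Fin n → ℝ) × ℝ | (∀ i, p.1 i ∈ Set.Icc (0 : ℝ) 1) ∧ p.2 ≤ f ∧
        ∀ S ∈ A, p.2 ≤ f * ∑ j ∈ S, p.1 j} =
      convexHull ℝ (Set.range fun β : Fin n → Bool => (toVec β, vagg A f (toVec β)))
        + {p : (Fin n → ℝ) × ℝ | p.1 = 0 ∧ p.2 ≤ 0} := by
  set H := convexHull ℝ (Set.range fun β : Fin n → Bool => (toVec β, vagg A f (toVec β)))
  set R := H + {p : (Fin n → ℝ) × ℝ | p.1 = 0 ∧ p.2 ≤ 0}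
  apply Set.Subset.antisymm
  · have hdown : ∀ {x : Fin n → ℝ} {s t : ℝ}, (x, s) ∈ R → t ≤ s → (x, t) ∈ R := by
      rintro x s t ⟨p, hp, q, ⟨hq₁, hq₂⟩, hpq⟩ hts
      obtain ⟨h₁, h₂⟩ := Prod.ext_iff.1 hpq
      simp only [Prod.fst_add, Prod.snd_add] at h₁ h₂
      refine ⟨p, hp, (0, t - p.2), ⟨rfl, by simp only; linarith⟩, ?_⟩
      ext1
      · simpa [hq₁] using h₁
      · simp
    have hRconv : Convex ℝ R := by
      refine (convex_convexHull ℝ _).add ?_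
      rintro p ⟨hp₁, hp₂⟩ q ⟨hq₁, hq₂⟩ a b ha hb -
      refine ⟨by simp [hp₁, hq₁], ?_⟩
      simp only [Prod.snd_add, Prod.smul_snd, smul_eq_mul]
      nlinarith
    have hvert : ∀ (β : Fin n → Bool) {t : ℝ}, t ≤ vagg A f (toVec β) → (toVec β, t) ∈ R :=
      fun β t ht => hdown (s := vagg A f (toVec β))
        ⟨_, subset_convexHull ℝ _ ⟨β, rfl⟩, 0, by simp, by simp⟩ ht
    have hslice : ∀ t : ℝ, Convex ℝ {x : Fin n → ℝ | (x, t) ∈ R} := by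
      intro t x hx z hz a b ha hb hab
      have h := hRconv hx hz ha hb hab
      simpa [← add_mul, hab] using h
    have hzero : ∀ x : Fin n → ℝ, (∀ i, x i ∈ Set.Icc (0 : ℝ) 1) → (x, (0 : ℝ)) ∈ R := by
      intro x hx
      refine convexHull_min ?_ (hslice 0) (mem_convexHull_toVec hx)
      rintro _ ⟨β, -, rfl⟩
      refine hvert β ?_
      simpa using mul_le_vagg (A := A) hf (y := 0) (by simp)
        fun S _ => Finset.sum_nonneg fun i _ => (toVec_mem_Icc β i).1
    have hone : ∀ x : Fin n → ℝ, (∀ i, x i ∈ Set.Icc (0 : ℝ) 1) →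
        (∀ S ∈ A, 1 ≤ ∑ j ∈ S, x j) → (x, f) ∈ R := by
      intro x hx hS
      refine convexHull_min ?_ (hslice f) (mem_convexHull_toVec hx)
      rintro _ ⟨β, hβ, rfl⟩
      refine hvert β ?_
      simpa using mul_le_vagg (A := A) hf (y := 1) (by simp)
        fun S hSA => hβ S (hA S hSA) (hS S hSA)
    rintro ⟨x, θ⟩ ⟨hx, hθf, hθ⟩
    simp only at hx hθf hθ
    rcases le_or_gt θ 0 with h0 | h0
    · exact hdown (hzero x hx) h0
    have hcov : ∀ S ∈ A, θ / f ≤ ∑ j ∈ S, x j := fun S hS => by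
      rw [div_le_iff₀' hf]
      exact hθ S hS
    rcases hθf.eq_or_lt with h1 | h1
    · rw [h1]
      exact hone x hx fun S hS => by simpa [h1, hf.ne'] using hcov S hS
    obtain ⟨w, z, hw, hz, hsplit, hS⟩ :=
      exists_cube_split hx (div_pos h0 hf) ((div_lt_one hf).2 h1)
    have h := hRconv (hone w hw fun S hSA => hS S (hcov S hSA)) (hzero z hz)
      (div_pos h0 hf).le (sub_pos.2 ((div_lt_one hf).2 h1)).le (add_sub_cancel _ _)
    simpa [← hsplit, hf.ne'] using h
  · have hconv : Convex ℝ {p : (Fin n → ℝ) × ℝ | (∀ i, p.1 i ∈ Set.Icc (0 : ℝ) 1) ∧ p.2 ≤ f ∧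
        ∀ S ∈ A, p.2 ≤ f * ∑ j ∈ S, p.1 j} := by
      rintro p ⟨hp₁, hp₂, hp₃⟩ q ⟨hq₁, hq₂, hq₃⟩ a b ha hb hab
      refine ⟨fun i => convex_Icc (0 : ℝ) 1 (hp₁ i) (hq₁ i) ha hb hab,
        convex_Iic f hp₂ hq₂ ha hb hab, fun S hS => ?_⟩
      simp only [Prod.snd_add, Prod.smul_snd, Prod.fst_add, Prod.smul_fst, Pi.add_apply,
        Pi.smul_apply, smul_eq_mul, Finset.sum_add_distrib, ← Finset.mul_sum]
      linarith [mul_le_mul_of_nonneg_left (hp₃ S hS) ha, mul_le_mul_of_nonneg_left (hq₃ S hS) hb]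
    rintro _ ⟨p, hp, q, ⟨hq₁, hq₂⟩, rfl⟩
    obtain ⟨h₁, h₂, h₃⟩ := convexHull_min (by
      rintro _ ⟨β, rfl⟩
      have hnn := fun i => (toVec_mem_Icc β i).1
      exact ⟨toVec_mem_Icc β, vagg_le hnn fun y hy _ => mul_le_of_le_one_right hf.le hy.2,
        fun S hS => vagg_le hnn fun y _ hy => mul_le_mul_of_nonneg_left (hy S hS) hf.le⟩) hconv hp
    refine ⟨by simpa [hq₁] using h₁, ?_, fun S hS => ?_⟩
    · simp only [Prod.snd_add]
      linarith
    · simp only [Prod.snd_add, Prod.fst_add, hq₁, add_zero]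
      linarith [h₃ S hS]
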